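/- There exists $\gamma_0 > 0$ with the following property. Let $\gamma \in \mathbb{R}$ with $|\gamma| \le \gamma_0$. Define $\epsilon^0_{2a-1}(\kappa) := (a-1+\kappa)^2$, $\epsilon^0_{2a}(\kappa) := (a-\kappa)^2$ for $a \in \mathbb{N}_+$. Suppose that for each $j \in \mathbb{N}_+$, $\epsilon_j : [0, 1/2] \to \mathbb{R}$ is continuous and satisfies $|\epsilon_j(\kappa) - \epsilon^0_j(\kappa)| \le |\gamma|$ for all $\kappa \in [0,1/2]$, and set $E_{m,n}(k) := \epsilon_m(k_1) + \epsilon_n(k_2)$. If $S \subseteq \mathbb{N}_+^2$ is finite and $$\inf_{k \in [0,1/2]^2} \mathrm{dist}\big( \{E_{m,n}(k) : (m,n) \in S\},\ \{E_{m,n}(k) : (m,n) \notin S\} \big) > 0,$$ then $S \subseteq A_2 \cup A_3$, where $A_r := \{(m,n) \in \mathbb{N}_+^2 : m + n = r\}$. -/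

import Mathlib

open Real

/-- The `j`-th eigenvalue of the free 1D Bloch operator `(D_t - κ)²`:
`ε⁰_{2a-1}(κ) = (a-1+κ)²`, `ε⁰_{2a}(κ) = (a-κ)²`. -/
noncomputable def eps0 (j : ℕ) (κ : ℝ) : ℝ :=
  if j % 2 = 1 then ((((j + 1) / 2 : ℕ) : ℝ) - 1 + κ) ^ 2
  else (((j / 2 : ℕ) : ℝ) - κ) ^ 2

theorem eps0_gap (m : ℕ) : ∃ a ∈ Set.Icc (0 : ℝ) (1 / 2), ∃ b ∈ Set.Icc (0 : ℝ) (1 / 2),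
    eps0 (m + 1) a - eps0 m a = m ∧ eps0 (m + 1) b - eps0 m b = 0 := by
  rcases Nat.even_or_odd' m with ⟨t, rfl | rfl⟩
  · refine ⟨1 / 2, by norm_num, 0, by norm_num, ?_, ?_⟩
    all_goals
      have h1 : (2 * t + 1) % 2 = 1 := by omega
      have h2 : ¬ (2 * t) % 2 = 1 := by omega
      have h3 : (2 * t + 1 + 1) / 2 = t + 1 := by omega
      have h4 : (2 * t) / 2 = t := by omega
      simp only [eps0, h1, h2, h3, h4, if_true, if_false]
      push_cast
      ring
  · refine ⟨0, by norm_num, 1 / 2, by norm_num, ?_, ?_⟩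
    all_goals
      have h1 : (2 * t + 1) % 2 = 1 := by omega
      have h2 : ¬ (2 * t + 1 + 1) % 2 = 1 := by omega
      have h3 : (2 * t + 1 + 1) / 2 = t + 1 := by omega
      simp only [eps0, h1, h2, h3, if_true, if_false]
      push_cast
      ring

/-- Proposition 5.1 of the paper: for `|γ|` sufficiently small, any finite set
`S` of band labels that is uniformly isolated from the other bands satisfies
`S ⊆ A₂ ∪ A₃`, where `A_r = {(m,n) ∈ ℕ₊² : m + n = r}`. -/
theorem isolated_bands_small_gamma :
    ∃ γ0 > (0 : ℝ), ∀ γ : ℝ, |γ| ≤ γ0 → ∀ eps : ℕ → ℝ → ℝ,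
      (∀ j : ℕ, 1 ≤ j → ContinuousOn (eps j) (Set.Icc (0 : ℝ) (1 / 2))) →
      (∀ j : ℕ, 1 ≤ j → ∀ κ ∈ Set.Icc (0 : ℝ) (1 / 2),
        |eps j κ - eps0 j κ| ≤ |γ|) →
      ∀ S : Finset (ℕ × ℕ), (∀ p ∈ S, 1 ≤ p.1 ∧ 1 ≤ p.2) →
      (∃ c > (0 : ℝ), ∀ k1 ∈ Set.Icc (0 : ℝ) (1 / 2),
        ∀ k2 ∈ Set.Icc (0 : ℝ) (1 / 2), ∀ p ∈ S, ∀ q : ℕ × ℕ,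
          1 ≤ q.1 → 1 ≤ q.2 → q ∉ S →
          c ≤ |(eps p.1 k1 + eps p.2 k2) - (eps q.1 k1 + eps q.2 k2)|) →
      ∀ p ∈ S, p.1 + p.2 = 2 ∨ p.1 + p.2 = 3 := by
  refine ⟨1 / 4, by norm_num, ?_⟩
  intro γ hγ eps hcont hbd S hS hiso
  obtain ⟨c, hc, hiso⟩ := hiso
  -- the linking principle
  have link : ∀ m n m' n' : ℕ, 1 ≤ m → 1 ≤ n → 1 ≤ m' → 1 ≤ n' →
      ∀ x ∈ Set.Icc (0 : ℝ) (1 / 2), ∀ y ∈ Set.Icc (0 : ℝ) (1 / 2),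
      ∀ x' ∈ Set.Icc (0 : ℝ) (1 / 2), ∀ y' ∈ Set.Icc (0 : ℝ) (1 / 2),
      1 ≤ (eps0 m x + eps0 n y) - (eps0 m' x + eps0 n' y) →
      (eps0 m x' + eps0 n y') - (eps0 m' x' + eps0 n' y') ≤ -1 →
      (m, n) ∈ S → (m', n') ∈ S := by
    intro m n m' n' hm hn hm' hn' x hx y hy x' hx' y' hy' h1 h2 hp
    by_contra hq
    let f : ℝ × ℝ → ℝ := fun k => (eps m k.1 + eps n k.2) - (eps m' k.1 + eps n' k.2)
    have c1 : ∀ j, 1 ≤ j → ContinuousOn (fun k : ℝ × ℝ => eps j k.1)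
        (Set.Icc (0 : ℝ) (1 / 2) ×ˢ Set.Icc (0 : ℝ) (1 / 2)) := fun j hj =>
      (hcont j hj).comp continuous_fst.continuousOn (fun k hk => hk.1)
    have c2 : ∀ j, 1 ≤ j → ContinuousOn (fun k : ℝ × ℝ => eps j k.2)
        (Set.Icc (0 : ℝ) (1 / 2) ×ˢ Set.Icc (0 : ℝ) (1 / 2)) := fun j hj =>
      (hcont j hj).comp continuous_snd.continuousOn (fun k hk => hk.2)
    have hf : ContinuousOn f (Set.Icc (0 : ℝ) (1 / 2) ×ˢ Set.Icc (0 : ℝ) (1 / 2)) :=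
      ((c1 m hm).add (c2 n hn)).sub ((c1 m' hm').add (c2 n' hn'))
    have hpre : IsPreconnected (Set.Icc (0 : ℝ) (1 / 2) ×ˢ Set.Icc (0 : ℝ) (1 / 2)) :=
      isPreconnected_Icc.prod isPreconnected_Icc
    have hpos : 0 ≤ f (x, y) := by
      have a1 := abs_le.1 (hbd m hm x hx)
      have a2 := abs_le.1 (hbd n hn y hy)
      have a3 := abs_le.1 (hbd m' hm' x hx)
      have a4 := abs_le.1 (hbd n' hn' y hy)
      simp only [f]
      linarith [a1.1, a2.1, a3.2, a4.2]
    have hneg : f (x', y') ≤ 0 := by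
      have a1 := abs_le.1 (hbd m hm x' hx')
      have a2 := abs_le.1 (hbd n hn y' hy')
      have a3 := abs_le.1 (hbd m' hm' x' hx')
      have a4 := abs_le.1 (hbd n' hn' y' hy')
      simp only [f]
      linarith [a1.2, a2.2, a3.1, a4.1]
    obtain ⟨k, hk, hk0⟩ := hpre.intermediate_value (a := (x', y')) (b := (x, y))
      ⟨hx', hy'⟩ ⟨hx, hy⟩ hf ⟨hneg, hpos⟩
    have := hiso k.1 hk.1 k.2 hk.2 (m, n) hp (m', n') hm' hn' hq
    have e : (eps m k.1 + eps n k.2) - (eps m' k.1 + eps n' k.2) = 0 := hk0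
    simp only [e, abs_zero] at this
    linarith
  -- moving along a diagonal
  have diag : ∀ m n : ℕ, 1 ≤ m → 1 ≤ n → (m, n + 1) ∈ S → (m + 1, n) ∈ S := by
    intro m n hm hn h
    obtain ⟨a, ha, b, hb, ea, eb⟩ := eps0_gap m
    obtain ⟨a', ha', b', hb', ea', eb'⟩ := eps0_gap n
    have hm1 : (1 : ℝ) ≤ m := by exact_mod_cast hm
    have hn1 : (1 : ℝ) ≤ n := by exact_mod_cast hn
    exact link m (n + 1) (m + 1) n hm (by omega) (by omega) hn b hb a' ha' a ha b' hb'
      (by linarith) (by linarith) h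
  -- moving up to the next diagonal
  have up : ∀ m : ℕ, 2 ≤ m → (m + 1, 1) ∈ S → (m, 3) ∈ S := by
    intro m hm h
    obtain ⟨a, ha, b, hb, ea, eb⟩ := eps0_gap m
    have hm1 : (2 : ℝ) ≤ m := by exact_mod_cast hm
    have e1 : eps0 1 0 = 0 := by norm_num [eps0]
    have e3 : eps0 3 0 = 1 := by norm_num [eps0]
    have h0 : (0 : ℝ) ∈ Set.Icc (0 : ℝ) (1 / 2) := by norm_num
    exact link (m + 1) 1 m 3 (by omega) (by omega) (by omega) (by omega) a ha 0 h0 b hb 0 h0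
      (by linarith) (by linarith) h
  have down : ∀ n m : ℕ, 1 ≤ m → (m, n + 1) ∈ S → (m + n, 1) ∈ S := by
    intro n
    induction n with
    | zero => intro m _ h; exact h
    | succ n ih =>
      intro m hm h
      have := ih (m + 1) (by omega) (diag m (n + 1) hm (by omega) h)
      rwa [show m + (n + 1) = m + 1 + n by omega]
  rintro ⟨m, n⟩ hp
  obtain ⟨hm, hn⟩ := hS _ hp
  simp only at hm hn ⊢
  by_contra hcon
  obtain ⟨n, rfl⟩ : ∃ t, n = t + 1 := ⟨n - 1, by omega⟩
  have hbase := down n m hm hp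
  have hall : ∀ t : ℕ, (m + n + t, 1) ∈ S := by
    intro t
    induction t with
    | zero => exact hbase
    | succ t ih =>
      obtain ⟨r, hr⟩ : ∃ r, m + n + t = r + 1 := ⟨m + n + t - 1, by omega⟩
      rw [hr] at ih
      have := down 2 r (by omega) (up r (by omega) ih)
      rwa [show m + n + (t + 1) = r + 2 by omega]
  have hinj : Function.Injective (fun t : ℕ => ((m + n + t, 1) : ℕ × ℕ)) := by
    intro s t h
    have := congrArg Prod.fst h
    simp only at this
    omega
  exact Set.infinite_of_injective_forall_mem hinj hall S.finite_toSet
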